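/- Let E be a Finsleroid–Finsler energy on U whose axis 1-form is the differential of α, and assume its fiberwise Hessian g_{ij} = ∂²E/∂y^i∂y^j is positive definite on the open set V = { (x,y) : q(x,y) > 0 }. Then on V: E · g^{kl} α_k α_l = ½ (b² + q²), which is a quadratic form in y for each x; consequently, under the conformal change Ẽ = e^{2α}E, the contracted mixed curvatures of the Berwald connection agree: P̃^l_{ijk} α_l = P^l_{ijk} α_l at every point of V. -/

import Mathlib

/-!
Why the theorem holds. Write `B = b² + gqb + q²` and `K = e^{GΦ}`, so that `E = ½ K B`. Since
`G dΦ = g (q db − b dq) / B`, the energy has the simple fiber derivative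
`E_j = K ((ay)_j + g q α_j)` (`pdy_finsleroid`), and one more derivative gives `g_{ij}`
(`gdown_finsleroid`). Because `a⁻¹α` has unit length and is annihilated by `a − α ⊗ α`, the vector
`X = K⁻¹ (a⁻¹α − (gq/B) y)` satisfies `g_{ij} X^j = α_i`; hence
`g^{kl} α_k α_l = X^k α_k = K⁻¹ (b² + q²) / B`, and multiplying by `E` gives `½ (b² + q²)`. By the
definition of `q` this is `½ a_{ij} y^i y^j`.

For any energy satisfying Euler's relation `g_{ij} y^j = E_i`, the conformal change `Ẽ = e^{2α}E`
changes the spray by `G̃^l = G^l + (y^k α_k) y^l − E X^l` (`spray_confE`). Contracted with `α_l`,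
the difference is `b² − E g^{kl} α_k α_l`, which here is a quadratic form in `y`, so its third
fiber derivatives vanish (`contracted_mixedCurv_confE`). To differentiate the identity between the
sprays termwise one needs both sprays to be smooth in `y`; this is obtained from the joint
smoothness of `E` on the open set `q > 0`, and is the purpose of `SmoothFn` and its closure
properties.
-/

/- Common framework: Finsler energies in local coordinates, following the paper's
   notation.  `x` is the base point, `y` the fiber (direction) variable. -/

noncomputable section
open scoped BigOperators

namespace FinslerConformal

/-- Vectors in local coordinates. -/
abbrev Vec (n : ℕ) := Fin n → ℝ

/-- Functions on `U × ℝⁿ`, written with separate base and fiber variables. -/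
abbrev Fn (n : ℕ) := Vec n → Vec n → ℝ

variable {n : ℕ}

/-- Partial derivative in the fiber variable `y`, in direction `i`. -/
def pdy (i : Fin n) (f : Fn n) : Fn n :=
  fun x y => fderiv ℝ (f x) y (Pi.single i 1)

/-- Partial derivative in the base variable `x`, in direction `i`. -/
def pdx (i : Fin n) (f : Fn n) : Fn n :=
  fun x y => fderiv ℝ (fun x' => f x' y) x (Pi.single i 1)

/-- Partial derivative `α_i = ∂α/∂x^i` of a function of the position only. -/
def pda (α : Vec n → ℝ) (i : Fin n) (x : Vec n) : ℝ :=
  fderiv ℝ α x (Pi.single i 1)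

/-- Riemann–Finsler metric `g_{ij} = ∂²E/∂y^i∂y^j`. -/
def gdown (E : Fn n) (i j : Fin n) : Fn n := pdy i (pdy j E)

/-- The Riemann–Finsler metric as a matrix. -/
def gmat (E : Fn n) (x y : Vec n) : Matrix (Fin n) (Fin n) ℝ :=
  Matrix.of fun i j => gdown E i j x y

/-- Inverse metric `g^{ij}`. -/
def gup (E : Fn n) (i j : Fin n) : Fn n := fun x y => (gmat E x y)⁻¹ i j

/-- First Cartan tensor `C_{ijk} = ∂g_{ij}/∂y^k`. -/
def cartanDown (E : Fn n) (i j k : Fin n) : Fn n := pdy k (gdown E i j)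

/-- `C^l_{ij} = g^{lk} C_{ijk}`. -/
def cartanUp (E : Fn n) (l i j : Fin n) : Fn n :=
  fun x y => ∑ k, gup E l k x y * cartanDown E i j k x y

/-- Geodesic spray coefficients
`G^l = ½ g^{lm}(y^k ∂²E/∂y^m∂x^k − ∂E/∂x^m)`. -/
def spray (E : Fn n) (l : Fin n) : Fn n :=
  fun x y => (1/2) * ∑ m, gup E l m x y *
    ((∑ k, y k * pdy m (pdx k E) x y) - pdx m E x y)

/-- `G^l_i = ∂G^l/∂y^i`. -/
def sprayD1 (E : Fn n) (l i : Fin n) : Fn n := pdy i (spray E l)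

/-- `G^l_{ij} = ∂G^l_i/∂y^j`. -/
def sprayD2 (E : Fn n) (l i j : Fin n) : Fn n := pdy j (sprayD1 E l i)

/-- `G^l_{ijk} = ∂G^l_{ij}/∂y^k`. -/
def sprayD3 (E : Fn n) (l i j k : Fin n) : Fn n := pdy k (sprayD2 E l i j)

/-- Mixed curvature of the Berwald connection `P^l_{ijk} = −G^l_{ijk}`. -/
def mixedCurv (E : Fn n) (l i j k : Fin n) : Fn n :=
  fun x y => - sprayD3 E l i j k x y

/-- Landsberg tensor
`P^l_{ij} = ½ g^{lm}(∂g_{jm}/∂x^i − 2G^k_i C_{jkm} − G^k_{ij} g_{km} − G^k_{im} g_{jk})`. -/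
def landsberg (E : Fn n) (l i j : Fin n) : Fn n :=
  fun x y => (1/2) * ∑ m, gup E l m x y *
    (pdx i (gdown E j m) x y
      - 2 * ∑ k, sprayD1 E k i x y * cartanDown E j k m x y
      - ∑ k, sprayD2 E k i j x y * gdown E k m x y
      - ∑ k, sprayD2 E k i m x y * gdown E j k x y)

/-- A Finsler energy on an open set `U ⊆ ℝⁿ`: `C^∞` on `U × (ℝⁿ \ {0})`,
positively 2-homogeneous in `y`, with positive definite fiberwise Hessian. -/
structure IsFinslerEnergy (U : Set (Vec n)) (E : Fn n) : Prop where
  smooth : ContDiffOn ℝ (⊤ : ℕ∞) (fun p : Vec n × Vec n => E p.1 p.2) (U ×ˢ {y : Vec n | y ≠ 0})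
  homog : ∀ x ∈ U, ∀ y : Vec n, y ≠ 0 → ∀ t : ℝ, 0 < t → E x (t • y) = t ^ 2 * E x y
  posdef : ∀ x ∈ U, ∀ y : Vec n, y ≠ 0 → (gmat E x y).PosDef

/-- Conformal change of the energy: `Ẽ = e^{2α} E`. -/
def confE (E : Fn n) (α : Vec n → ℝ) : Fn n :=
  fun x y => Real.exp (2 * α x) * E x y

/-- `X^l = g^{lm} α_m`. -/
def Xup (E : Fn n) (α : Vec n → ℝ) (l : Fin n) : Fn n :=
  fun x y => ∑ m, gup E l m x y * pda α m x

/-- `X^l_i = ∂X^l/∂y^i`. -/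
def XupD (E : Fn n) (α : Vec n → ℝ) (l i : Fin n) : Fn n := pdy i (Xup E α l)

/-- `X^l_{ij} = ∂²X^l/∂y^i∂y^j`. -/
def XupD2 (E : Fn n) (α : Vec n → ℝ) (l i j : Fin n) : Fn n := pdy j (XupD E α l i)

/-- Difference tensor of the mixed Berwald curvatures `B^l_{ijk} = G̃^l_{ijk} − G^l_{ijk}`. -/
def Bdiff (E : Fn n) (α : Vec n → ℝ) (l i j k : Fin n) : Fn n :=
  fun x y => sprayD3 (confE E α) l i j k x y - sprayD3 E l i j k x y

/-- vv-curvature of the Cartan connection `Q^l_{ijk} = C^l_{jm}C^m_{ik} − C^l_{im}C^m_{jk}`. -/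
def QUp (E : Fn n) (l i j k : Fin n) : Fn n :=
  fun x y => ∑ m, (cartanUp E l j m x y * cartanUp E m i k x y
    - cartanUp E l i m x y * cartanUp E m j k x y)

/-- Lowered vv-curvature `Q_{pijk} = g_{pl} Q^l_{ijk}`. -/
def QDown (E : Fn n) (p i j k : Fin n) : Fn n :=
  fun x y => ∑ l, gdown E p l x y * QUp E l i j k x y

/-- `y^m α_m`. -/
def yalpha (α : Vec n → ℝ) : Fn n := fun x y => ∑ m, y m * pda α m x

/-- `X^l α_l`, the Riemann–Finsler norm square of the gradient `X`. -/
def Xalpha (E : Fn n) (α : Vec n → ℝ) : Fn n :=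
  fun x y => ∑ l, Xup E α l x y * pda α l x

/-- Components of the projected vector field `η^l = X^l − ((y^mα_m)/(2E)) y^l`. -/
def etaUp (E : Fn n) (α : Vec n → ℝ) (l : Fin n) : Fn n :=
  fun x y => Xup E α l x y - (yalpha α x y / (2 * E x y)) * y l

/-- `η = η^l α_l = X^lα_l − (y^mα_m)²/(2E)`. -/
def etaSc (E : Fn n) (α : Vec n → ℝ) : Fn n :=
  fun x y => ∑ l, etaUp E α l x y * pda α l x

/-- `W^l = X^s X^l_s`. -/
def Wup (E : Fn n) (α : Vec n → ℝ) (l : Fin n) : Fn n :=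
  fun x y => ∑ s, Xup E α s x y * XupD E α l s x y

/-- The associated Riemannian energy `E_* = E · X^lα_l = E · g^{lm}α_lα_m`. -/
def Estar (E : Fn n) (α : Vec n → ℝ) : Fn n :=
  fun x y => E x y * Xalpha E α x y

/-- Riemannian gradient `X_*^l = g_*^{lk} α_k`, with respect to a Hessian matrix `gs`. -/
def Xstar (α : Vec n → ℝ) (gs : Matrix (Fin n) (Fin n) ℝ) (p : Vec n) : Vec n :=
  fun l => ∑ k, gs⁻¹ l k * pda α k p

/-- `b² = g_*^{kl} α_k α_l`. -/
def bsq (α : Vec n → ℝ) (gs : Matrix (Fin n) (Fin n) ℝ) (p : Vec n) : ℝ :=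
  ∑ k, ∑ l, gs⁻¹ k l * pda α k p * pda α l p

/-- The paper's Gram expression
`X^i_m X^m X^s_i α_s · ( X^lα_l − (y^mα_m)²/(2E) ) − ( X^k X^j_k α_j )²`. -/
def gramEtaW (E : Fn n) (α : Vec n → ℝ) : Fn n :=
  fun x y =>
    (∑ i, Wup E α i x y * ∑ s, XupD E α s i x y * pda α s x) *
      (Xalpha E α x y - (yalpha α x y) ^ 2 / (2 * E x y))
    - (∑ k, ∑ j, Xup E α k x y * XupD E α j k x y * pda α j x) ^ 2

/-- The curvature contraction `X^j X^s_j X^a X^c X^i_m X^m Q_{aisc}`. -/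
def Qcon (E : Fn n) (α : Vec n → ℝ) : Fn n :=
  fun x y => ∑ j, ∑ s, ∑ a, ∑ c, ∑ i,
    Xup E α j x y * XupD E α s j x y * Xup E α a x y * Xup E α c x y *
      Wup E α i x y * QDown E a i s c x y

/-- `θ = (X^l_s X^s α_l)/η`. -/
def thetaFn (E : Fn n) (α : Vec n → ℝ) : Fn n :=
  fun x y => (∑ l, Wup E α l x y * pda α l x) / etaSc E α x y

end FinslerConformal

namespace FinslerConformal

/-- Joint smoothness in `(x, y)` on a set `W` of pairs (position, direction). -/
def SmoothFn {n : ℕ} (W : Set (Vec n × Vec n)) (f : Fn n) : Prop :=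
  ContDiffOn ℝ (⊤ : ℕ∞) (fun p : Vec n × Vec n => f p.1 p.2) W

/-! ### Fiber calculus of smooth functions of position and direction -/

section Calculus

variable {n : ℕ} {W : Set (Vec n × Vec n)} {f g : Fn n} {x y : Vec n}

theorem SmoothFn.diffAt (hW : IsOpen W) (hf : SmoothFn W f) (h : (x, y) ∈ W) :
    DifferentiableAt ℝ (fun p : Vec n × Vec n => f p.1 p.2) (x, y) :=
  (hf.contDiffAt (hW.mem_nhds h)).differentiableAt (by simp)

theorem SmoothFn.hasFDerivAt_y (hW : IsOpen W) (hf : SmoothFn W f) (h : (x, y) ∈ W) :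
    HasFDerivAt (f x) ((fderiv ℝ (fun p : Vec n × Vec n => f p.1 p.2) (x, y)).comp
      (ContinuousLinearMap.inr ℝ (Vec n) (Vec n))) y :=
  HasFDerivAt.comp (g := fun p : Vec n × Vec n => f p.1 p.2) y
    (hf.diffAt hW h).hasFDerivAt (hasFDerivAt_prodMk_right x y)

theorem SmoothFn.hasFDerivAt_x (hW : IsOpen W) (hf : SmoothFn W f) (h : (x, y) ∈ W) :
    HasFDerivAt (fun x' => f x' y) ((fderiv ℝ (fun p : Vec n × Vec n => f p.1 p.2) (x, y)).comp
      (ContinuousLinearMap.inl ℝ (Vec n) (Vec n))) x :=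
  HasFDerivAt.comp (g := fun p : Vec n × Vec n => f p.1 p.2) (f := fun x' => (x', y)) x
    (hf.diffAt hW h).hasFDerivAt (hasFDerivAt_prodMk_left x y)

theorem SmoothFn.diff_y (hW : IsOpen W) (hf : SmoothFn W f) (h : (x, y) ∈ W) :
    DifferentiableAt ℝ (f x) y := (hf.hasFDerivAt_y hW h).differentiableAt

theorem SmoothFn.diff_x (hW : IsOpen W) (hf : SmoothFn W f) (h : (x, y) ∈ W) :
    DifferentiableAt ℝ (fun x' => f x' y) x := (hf.hasFDerivAt_x hW h).differentiableAt

theorem SmoothFn.pdy (hW : IsOpen W) (hf : SmoothFn W f) (i : Fin n) :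
    SmoothFn W (pdy i f) := by
  have h1 := (hf.fderiv_of_isOpen hW (m := (⊤ : ℕ∞)) (by simp)).clm_apply
    (contDiffOn_const (c := ((0 : Vec n), (Pi.single i 1 : Vec n))))
  refine h1.congr fun p hp => ?_
  simp [FinslerConformal.pdy, (hf.hasFDerivAt_y hW (x := p.1) (y := p.2) hp).fderiv]

theorem SmoothFn.pdx (hW : IsOpen W) (hf : SmoothFn W f) (i : Fin n) :
    SmoothFn W (pdx i f) := by
  have h1 := (hf.fderiv_of_isOpen hW (m := (⊤ : ℕ∞)) (by simp)).clm_apply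
    (contDiffOn_const (c := ((Pi.single i 1 : Vec n), (0 : Vec n))))
  refine h1.congr fun p hp => ?_
  simp [FinslerConformal.pdx, (hf.hasFDerivAt_x hW (x := p.1) (y := p.2) hp).fderiv]

/-- Fiber derivatives are local, so identities on an open set may be differentiated. -/
theorem pdy_congr (hW : IsOpen W) (hfg : ∀ x y, (x, y) ∈ W → f x y = g x y)
    (h : (x, y) ∈ W) (i : Fin n) : pdy i f x y = pdy i g x y := by
  have : f x =ᶠ[nhds y] g x := by
    have hc : Continuous fun y' : Vec n => (x, y') := by fun_prop
    filter_upwards [(hW.preimage hc).mem_nhds h] with y' hy'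
    exact hfg x y' hy'
  simp only [pdy, this.fderiv_eq]

/-- A fiber derivative computed along the coordinate line `t ↦ y + t e_i`. -/
theorem pdy_eq_of_line {d : ℝ} {i : Fin n} (hd : DifferentiableAt ℝ (f x) y)
    (h : HasDerivAt (fun t : ℝ => f x (y + t • Pi.single i 1)) d 0) : pdy i f x y = d :=
  (hd.hasFDerivAt.hasLineDerivAt (Pi.single i 1)).unique h

theorem SmoothFn.of_base {U : Set (Vec n)} {c : Vec n → ℝ} (hc : ContDiffOn ℝ (⊤ : ℕ∞) c U)
    (hWU : ∀ p ∈ W, p.1 ∈ U) : SmoothFn W (fun x _ => c x) :=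
  hc.comp contDiff_fst.contDiffOn hWU

theorem SmoothFn.coord (i : Fin n) : SmoothFn W (fun _ y => y i) :=
  ContDiff.contDiffOn (by fun_prop)

theorem SmoothFn.mul (hf : SmoothFn W f) (hg : SmoothFn W g) :
    SmoothFn W (fun x y => f x y * g x y) := ContDiffOn.mul hf hg

theorem SmoothFn.add (hf : SmoothFn W f) (hg : SmoothFn W g) :
    SmoothFn W (fun x y => f x y + g x y) := ContDiffOn.add hf hg

theorem SmoothFn.sub (hf : SmoothFn W f) (hg : SmoothFn W g) :
    SmoothFn W (fun x y => f x y - g x y) := ContDiffOn.sub hf hg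

theorem SmoothFn.const (c : ℝ) : SmoothFn W (fun _ _ => c) := contDiffOn_const

theorem SmoothFn.sum {ι : Type*} {s : Finset ι} {F : ι → Fn n} (h : ∀ i ∈ s, SmoothFn W (F i)) :
    SmoothFn W (fun x y => ∑ i ∈ s, F i x y) := ContDiffOn.sum h

theorem SmoothFn.prod {ι : Type*} {s : Finset ι} {F : ι → Fn n} (h : ∀ i ∈ s, SmoothFn W (F i)) :
    SmoothFn W (fun x y => ∏ i ∈ s, F i x y) := contDiffOn_prod h

theorem SmoothFn.congr (hf : SmoothFn W f) (h : ∀ x y, (x, y) ∈ W → g x y = f x y) :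
    SmoothFn W g := ContDiffOn.congr hf fun p hp => h p.1 p.2 hp

theorem SmoothFn.det {m : ℕ} {M : Vec n → Vec n → Matrix (Fin m) (Fin m) ℝ}
    (h : ∀ i j, SmoothFn W (fun x y => M x y i j)) : SmoothFn W (fun x y => (M x y).det) := by
  simp only [Matrix.det_apply']
  exact SmoothFn.sum fun s _ => (SmoothFn.const _).mul (SmoothFn.prod fun i _ => h _ _)

/-- Cramer's rule: the inverse of a smooth invertible matrix field is smooth. -/
theorem SmoothFn.gup (hW : IsOpen W) (hf : SmoothFn W f)
    (hdet : ∀ x y, (x, y) ∈ W → (gmat f x y).det ≠ 0) (i j : Fin n) :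
    SmoothFn W (gup f i j) := by
  have hent : ∀ k l, SmoothFn W (fun x y => gmat f x y k l) := fun k l =>
    (hf.pdy hW l).pdy hW k
  have hadj : SmoothFn W (fun x y => (gmat f x y).adjugate i j) := by
    simp only [Matrix.adjugate_apply]
    refine SmoothFn.det fun k l => ?_
    by_cases hk : k = j
    · subst hk
      simpa using SmoothFn.const _
    · simpa [Matrix.updateRow_ne hk] using hent k l
  have hinv : SmoothFn W (fun x y => ((gmat f x y).det)⁻¹) :=
    ContDiffOn.inv (SmoothFn.det hent) fun p hp => hdet p.1 p.2 hp
  refine (hinv.mul hadj).congr fun x y _ => ?_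
  simp [FinslerConformal.gup, Matrix.inv_def, Ring.inverse_eq_inv']

theorem SmoothFn.spray (hW : IsOpen W) (hf : SmoothFn W f)
    (hdet : ∀ x y, (x, y) ∈ W → (gmat f x y).det ≠ 0) (l : Fin n) :
    SmoothFn W (spray f l) :=
  (SmoothFn.const _).mul <| SmoothFn.sum fun m _ => (hf.gup hW hdet l m).mul <|
    (SmoothFn.sum fun k _ => (SmoothFn.coord k).mul ((hf.pdx hW k).pdy hW m)).sub (hf.pdx hW m)

/-- Fiber differentiation commutes with contraction against a covector of the base point. -/
theorem pdy_contract (hW : IsOpen W) {F : Fin n → Fn n} (hF : ∀ l, SmoothFn W (F l))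
    (c : Fin n → Vec n → ℝ) (h : (x, y) ∈ W) (i : Fin n) :
    pdy i (fun x y => ∑ l, F l x y * c l x) x y = ∑ l, pdy i (F l) x y * c l x := by
  have h1 : HasFDerivAt (fun y' => ∑ l, F l x y' * c l x)
      (∑ l, c l x • fderiv ℝ (F l x) y) y :=
    HasFDerivAt.fun_sum fun l _ => ((hF l).diff_y hW h).hasFDerivAt.mul_const (c l x)
  simp [pdy, h1.fderiv, mul_comm]

theorem hasDerivAt_line_coord (p i : Fin n) (y : Vec n) : HasDerivAt
    (fun t : ℝ => (y + t • (Pi.single i 1 : Vec n)) p) ((Pi.single i 1 : Vec n) p) 0 := by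
  have := ((hasDerivAt_id (0 : ℝ)).mul_const ((Pi.single i 1 : Vec n) p)).const_add (y p)
  simpa using this

theorem hasDerivAt_line_linear (c : Vec n) (i : Fin n) (y : Vec n) : HasDerivAt
    (fun t : ℝ => ∑ p, c p * (y + t • (Pi.single i 1 : Vec n)) p) (c i) 0 := by
  have := HasDerivAt.fun_sum (u := Finset.univ) fun p _ =>
    (hasDerivAt_line_coord p i y).const_mul (c p)
  refine this.congr_deriv ?_
  simp [Pi.single_apply]

theorem hasDerivAt_line_quadratic (C : Fin n → Fin n → ℝ) (i : Fin n) (y : Vec n) : HasDerivAt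
    (fun t : ℝ => ∑ p, ∑ r, C p r * (y + t • (Pi.single i 1 : Vec n)) p *
      (y + t • (Pi.single i 1 : Vec n)) r) (∑ p, (C i p + C p i) * y p) 0 := by
  have := HasDerivAt.fun_sum (u := Finset.univ) fun p _ =>
    HasDerivAt.fun_sum (u := Finset.univ) fun r _ =>
      ((hasDerivAt_line_coord p i y).const_mul (C p r)).mul (hasDerivAt_line_coord r i y)
  refine this.congr_deriv ?_
  simp only [zero_smul, add_zero, Finset.sum_add_distrib, add_mul]
  congr 1
  · rw [Finset.sum_comm]
    simp [Pi.single_apply]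
  · simp [Pi.single_apply]

/-- Third fiber derivatives of a fiberwise quadratic form vanish. -/
theorem pdy3_quadratic (C : Vec n → Fin n → Fin n → ℝ) (i j k : Fin n) :
    pdy k (pdy j (pdy i (fun x y => ∑ p, ∑ r, C x p r * y p * y r))) x y = 0 := by
  have h1 : pdy i (fun x y => ∑ p, ∑ r, C x p r * y p * y r) =
      fun x y => ∑ p, (C x i p + C x p i) * y p := by
    funext x y
    exact pdy_eq_of_line (by fun_prop) (hasDerivAt_line_quadratic (C x) i y)
  have h2 : pdy j (fun x y => ∑ p, (C x i p + C x p i) * y p) =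
      fun x _ => C x i j + C x j i := by
    funext x y
    exact pdy_eq_of_line (by fun_prop) (hasDerivAt_line_linear _ j y)
  rw [h1, h2]
  simp [pdy]

end Calculus

/-! ### Conformal change of an energy -/

section Conformal

variable {n : ℕ} {U : Set (Vec n)} {W : Set (Vec n × Vec n)} {E : Fn n} {α : Vec n → ℝ}
  {x y : Vec n}

theorem pda_smooth (hU : IsOpen U) (hα : ContDiffOn ℝ (⊤ : ℕ∞) α U) (i : Fin n) :
    ContDiffOn ℝ (⊤ : ℕ∞) (pda α i) U :=
  (hα.fderiv_of_isOpen hU (m := (⊤ : ℕ∞)) (by simp)).clm_apply contDiffOn_const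

theorem SmoothFn.confE (hα : ContDiffOn ℝ (⊤ : ℕ∞) α U) (hWU : ∀ p ∈ W, p.1 ∈ U)
    (hE : SmoothFn W E) : SmoothFn W (confE E α) :=
  (SmoothFn.of_base (c := fun x => Real.exp (2 * α x)) ((contDiffOn_const.mul hα).exp) hWU).mul hE

theorem pdy_mul_base (hW : IsOpen W) {f : Fn n} (hf : SmoothFn W f) (c : Vec n → ℝ)
    (h : (x, y) ∈ W) (i : Fin n) :
    pdy i (fun x y => c x * f x y) x y = c x * pdy i f x y := by
  simp [pdy, ((hf.diff_y hW h).hasFDerivAt.const_mul (c x)).fderiv]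

theorem gmat_confE (hW : IsOpen W) (hE : SmoothFn W E) (h : (x, y) ∈ W) :
    gmat (confE E α) x y = Real.exp (2 * α x) • gmat E x y := by
  ext i j
  have h1 : gdown (confE E α) i j x y = _ := pdy_congr hW (fun x y hxy =>
    pdy_mul_base hW hE (fun x => Real.exp (2 * α x)) hxy j) h i
  rw [pdy_mul_base hW (hE.pdy hW j) (fun x => Real.exp (2 * α x)) h i] at h1
  simpa [gmat, gdown] using h1

theorem gup_confE (hW : IsOpen W) (hE : SmoothFn W E) (h : (x, y) ∈ W)
    (hdet : (gmat E x y).det ≠ 0) (i j : Fin n) :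
    gup (confE E α) i j x y = Real.exp (-(2 * α x)) * gup E i j x y := by
  have hinv : (gmat (confE E α) x y)⁻¹ = Real.exp (-(2 * α x)) • (gmat E x y)⁻¹ := by
    refine Matrix.inv_eq_right_inv ?_
    rw [gmat_confE hW hE h, smul_mul_smul_comm, ← Real.exp_add,
      Matrix.mul_nonsing_inv _ (isUnit_iff_ne_zero.mpr hdet)]
    simp
  simp [gup, hinv]

/-- Contracting `g^{-1}` with a covector `c` undoes `g_{ij} z^j = c_i`. -/
theorem gup_solve {c z : Fin n → ℝ} (hdet : (gmat E x y).det ≠ 0)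
    (h : ∀ i, ∑ j, gdown E i j x y * z j = c i) (l : Fin n) :
    ∑ m, gup E l m x y * c m = z l := by
  have h1 : (gmat E x y).mulVec z = c := by
    funext i
    simpa [Matrix.mulVec, dotProduct, gmat] using h i
  have h2 : (gmat E x y)⁻¹.mulVec c = z := by
    rw [← h1, Matrix.mulVec_mulVec, Matrix.nonsing_inv_mul _ (isUnit_iff_ne_zero.mpr hdet),
      Matrix.one_mulVec]
  simpa [Matrix.mulVec, dotProduct, gup] using congrFun h2 l

theorem pdx_confE (hU : IsOpen U) (hα : ContDiffOn ℝ (⊤ : ℕ∞) α U) (hW : IsOpen W)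
    (hWU : ∀ p ∈ W, p.1 ∈ U) (hE : SmoothFn W E) (h : (x, y) ∈ W) (k : Fin n) :
    pdx k (confE E α) x y = Real.exp (2 * α x) * (2 * pda α k x * E x y + pdx k E x y) := by
  have hαx : HasFDerivAt α (fderiv ℝ α x) x :=
    ((hα.contDiffAt (hU.mem_nhds (hWU _ h))).differentiableAt (by simp)).hasFDerivAt
  have h1 := ((hαx.const_mul 2).exp).mul (hE.diff_x hW h).hasFDerivAt
  have h2 : pdx k (confE E α) x y = _ := congrArg (fun L => L (Pi.single k 1)) h1.fderiv
  rw [h2]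
  simp only [pdx, pda, add_apply, smul_apply, smul_eq_mul]
  ring

/-- Conformal change of the spray: `G̃^l = G^l + (y^k α_k) y^l − E X^l`. The middle term uses
Euler's relation `g_{ij} y^j = ∂E/∂y^i`. -/
theorem spray_confE (hU : IsOpen U) (hα : ContDiffOn ℝ (⊤ : ℕ∞) α U) (hW : IsOpen W)
    (hWU : ∀ p ∈ W, p.1 ∈ U) (hE : SmoothFn W E) (h : (x, y) ∈ W)
    (hdet : (gmat E x y).det ≠ 0)
    (heuler : ∀ i, ∑ j, gdown E i j x y * y j = pdy i E x y) (l : Fin n) :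
    spray (confE E α) l x y =
      spray E l x y + (∑ k, y k * pda α k x) * y l - E x y * ∑ m, gup E l m x y * pda α m x := by
  have hdd : ∀ k m, pdy m (pdx k (confE E α)) x y =
      Real.exp (2 * α x) * (2 * pda α k x * pdy m E x y + pdy m (pdx k E) x y) := by
    intro k m
    rw [pdy_congr hW (fun x y hxy => pdx_confE hU hα hW hWU hE hxy k) h m]
    have h1 := (((hE.diff_y hW h).hasFDerivAt.const_mul (2 * pda α k x)).add
      ((hE.pdx hW k).diff_y hW h).hasFDerivAt).const_mul (Real.exp (2 * α x))
    have h2 := congrArg (fun L => L (Pi.single m 1)) h1.fderiv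
    simpa [pdy, mul_add] using h2
  have hx : Real.exp (-(2 * α x)) * Real.exp (2 * α x) = 1 := by
    rw [← Real.exp_add]; simp
  have hterm : ∀ m, gup (confE E α) l m x y *
      ((∑ k, y k * pdy m (pdx k (confE E α)) x y) - pdx m (confE E α) x y) =
      gup E l m x y * ((∑ k, y k * pdy m (pdx k E) x y) - pdx m E x y)
      + 2 * (∑ k, y k * pda α k x) * (gup E l m x y * pdy m E x y)
      - 2 * E x y * (gup E l m x y * pda α m x) := by
    intro m
    rw [gup_confE hW hE h hdet, pdx_confE hU hα hW hWU hE h]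
    have : (∑ k, y k * pdy m (pdx k (confE E α)) x y) = Real.exp (2 * α x) *
        (2 * (∑ k, y k * pda α k x) * pdy m E x y + ∑ k, y k * pdy m (pdx k E) x y) := by
      simp only [hdd, Finset.mul_sum, Finset.sum_mul, ← Finset.sum_add_distrib]
      exact Finset.sum_congr rfl fun k _ => by ring
    rw [this]
    linear_combination (gup E l m x y * (2 * (∑ k, y k * pda α k x) * pdy m E x y +
      (∑ k, y k * pdy m (pdx k E) x y) - 2 * pda α m x * E x y - pdx m E x y)) * hx
  have hy := gup_solve hdet heuler l
  simp only [spray, hterm, Finset.sum_add_distrib, Finset.sum_sub_distrib, ← Finset.mul_sum, hy]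
  ring

/-- If `E g^{kl} α_k α_l` is a fiberwise quadratic form, then so is `(G̃^l − G^l) α_l`, and three
fiber derivatives annihilate it. -/
theorem contracted_mixedCurv_confE (hU : IsOpen U) (hα : ContDiffOn ℝ (⊤ : ℕ∞) α U)
    (hW : IsOpen W) (hWU : ∀ p ∈ W, p.1 ∈ U) (hE : SmoothFn W E)
    (hdet : ∀ x y, (x, y) ∈ W → (gmat E x y).det ≠ 0)
    (heuler : ∀ x y, (x, y) ∈ W → ∀ i, ∑ j, gdown E i j x y * y j = pdy i E x y)
    (C : Vec n → Fin n → Fin n → ℝ)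
    (hquad : ∀ x y, (x, y) ∈ W → E x y * ∑ k, ∑ l, gup E k l x y * pda α k x * pda α l x =
      ∑ p, ∑ r, C x p r * y p * y r)
    (h : (x, y) ∈ W) (i j k : Fin n) :
    (∑ l, mixedCurv (confE E α) l i j k x y * pda α l x) =
      ∑ l, mixedCurv E l i j k x y * pda α l x := by
  have hcE : SmoothFn W (confE E α) := hE.confE hα hWU
  have hcdet : ∀ x y, (x, y) ∈ W → (gmat (confE E α) x y).det ≠ 0 := by
    intro x y hxy
    rw [gmat_confE hW hE hxy, Matrix.det_smul]
    exact mul_ne_zero (pow_ne_zero _ (Real.exp_pos _).ne') (hdet x y hxy)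
  -- Contraction with `α_l` commutes with the three fiber derivatives.
  have key : ∀ F : Fn n, (∀ l, SmoothFn W (spray F l)) → ∀ x y, (x, y) ∈ W →
      pdy k (pdy j (pdy i (fun x y => ∑ l, spray F l x y * pda α l x))) x y =
        ∑ l, sprayD3 F l i j k x y * pda α l x := by
    intro F hF x y hxy
    have e1 : ∀ x y, (x, y) ∈ W → pdy i (fun x y => ∑ l, spray F l x y * pda α l x) x y =
        ∑ l, sprayD1 F l i x y * pda α l x := fun x y hxy => pdy_contract hW hF (pda α) hxy i
    have e2 : ∀ x y, (x, y) ∈ W →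
        pdy j (pdy i (fun x y => ∑ l, spray F l x y * pda α l x)) x y =
        ∑ l, sprayD2 F l i j x y * pda α l x := fun x y hxy =>
      (pdy_congr hW e1 hxy j).trans
        (pdy_contract hW (fun l => (hF l).pdy hW i) (pda α) hxy j)
    exact (pdy_congr hW e2 hxy k).trans
        (pdy_contract hW (fun l => ((hF l).pdy hW i).pdy hW j) (pda α) hxy k)
  have hS := hE.spray hW hdet
  have hcS := hcE.spray hW hcdet
  let D : Fn n := fun x y => ∑ p, ∑ r, (pda α p x * pda α r x - C x p r) * y p * y r
  have hdiff : ∀ x y, (x, y) ∈ W → ∑ l, spray (confE E α) l x y * pda α l x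
      - ∑ l, spray E l x y * pda α l x = D x y := by
    intro x y hxy
    have hD : D x y = (∑ k, y k * pda α k x) * (∑ l, y l * pda α l x) -
        ∑ p, ∑ r, C x p r * y p * y r := by
      simp only [D, Finset.sum_mul_sum, ← Finset.sum_sub_distrib]
      exact Finset.sum_congr rfl fun p _ => Finset.sum_congr rfl fun r _ => by ring
    rw [hD, ← hquad x y hxy, ← Finset.sum_sub_distrib]
    simp only [Finset.mul_sum, ← Finset.sum_sub_distrib]
    refine Finset.sum_congr rfl fun l _ => ?_
    rw [spray_confE hU hα hW hWU hE hxy (hdet x y hxy) (heuler x y hxy)]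
    simp only [Finset.mul_sum, Finset.sum_mul, add_mul, sub_mul]
    rw [add_sub_assoc, add_sub_cancel_left]
    congr 1
    · exact Finset.sum_congr rfl fun m _ => by ring
    · exact Finset.sum_congr rfl fun m _ => by ring
  -- The difference of two smooth fields differentiates termwise.
  have hsub : ∀ {f g d : Fn n}, SmoothFn W f → SmoothFn W g →
      (∀ x y, (x, y) ∈ W → f x y - g x y = d x y) → ∀ (i : Fin n) x y, (x, y) ∈ W →
      pdy i f x y - pdy i g x y = pdy i d x y := by
    intro f g d hf hg hfg i x y hxy
    rw [← pdy_congr hW hfg hxy i]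
    simp [pdy, fderiv_fun_sub (hf.diff_y hW hxy) (hg.diff_y hW hxy)]
  have hpda : ∀ l, SmoothFn W (fun x _ => pda α l x) := fun l =>
    SmoothFn.of_base (pda_smooth hU hα l) hWU
  have s1 : SmoothFn W (fun x y => ∑ l, spray (confE E α) l x y * pda α l x) :=
    SmoothFn.sum fun l _ => (hcS l).mul (hpda l)
  have s2 : SmoothFn W (fun x y => ∑ l, spray E l x y * pda α l x) :=
    SmoothFn.sum fun l _ => (hS l).mul (hpda l)
  have h3 := hsub ((s1.pdy hW i).pdy hW j) ((s2.pdy hW i).pdy hW j)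
    (hsub (s1.pdy hW i) (s2.pdy hW i) (hsub s1 s2 hdiff i) j) k x y h
  rw [key _ hcS x y h, key _ hS x y h] at h3
  have hz : pdy k (pdy j (pdy i D)) x y = 0 :=
    pdy3_quadratic (fun x p r => pda α p x * pda α r x - C x p r) i j k
  rw [hz] at h3
  simp only [mixedCurv, neg_mul, Finset.sum_neg_distrib]
  linarith

end Conformal

/-! ### Derivatives of the Finsleroid energy -/

section Finsleroid

/-- The factor `e^{GΦ}` of the Finsleroid energy as a function of `g`, `b` and `q`. -/
def expFactor (g b q : ℝ) : ℝ :=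
  Real.exp (g / Real.sqrt (1 - g ^ 2 / 4) *
    Real.arctan ((2 * b + g * q) / (2 * Real.sqrt (1 - g ^ 2 / 4) * q)))

theorem charge_pos {g : ℝ} (hg : g ∈ Set.Ioo (-2 : ℝ) 2) : 0 < 1 - g ^ 2 / 4 := by
  nlinarith [hg.1, hg.2]

/-- The characteristic form `B = b² + gqb + q²` has negative discriminant. -/
theorem charForm_pos {g b q : ℝ} (hg : g ∈ Set.Ioo (-2 : ℝ) 2) (hq : 0 < q) :
    0 < b ^ 2 + g * q * b + q ^ 2 := by
  nlinarith [sq_nonneg (b + g * q / 2), mul_pos (charge_pos hg) (pow_pos hq 2)]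

/-- Logarithmic derivative of `e^{GΦ}`: `G dΦ = g (q db − b dq) / B`. -/
theorem hasDerivAt_expFactor {g : ℝ} (hg : g ∈ Set.Ioo (-2 : ℝ) 2) {b q : ℝ → ℝ} {b' q' : ℝ}
    (hb : HasDerivAt b b' 0) (hq : HasDerivAt q q' 0) (hq0 : 0 < q 0) :
    HasDerivAt (fun t => expFactor g (b t) (q t))
      (expFactor g (b 0) (q 0) *
        (g * (q 0 * b' - b 0 * q') / (b 0 ^ 2 + g * q 0 * b 0 + q 0 ^ 2))) 0 := by
  have hh := Real.sqrt_pos.mpr (charge_pos hg)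
  have hh2 := Real.sq_sqrt (charge_pos hg).le
  have hB := charForm_pos (b := b 0) hg hq0
  simp only [expFactor]
  generalize Real.sqrt (1 - g ^ 2 / 4) = h at hh hh2 ⊢
  have hu := ((hb.const_mul 2).add (hq.const_mul g)).div (hq.const_mul (2 * h))
    (by positivity : 2 * h * q 0 ≠ 0)
  refine ((hu.arctan.const_mul (g / h)).exp).congr_deriv ?_
  simp only [Pi.add_apply]
  congr 1
  have hden : 1 + ((2 * b 0 + g * q 0) / (2 * h * q 0)) ^ 2 =
      (b 0 ^ 2 + g * q 0 * b 0 + q 0 ^ 2) / (h * q 0) ^ 2 := by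
    field_simp
    linear_combination (4 * q 0 ^ 2) * hh2
  simp only [Pi.div_apply, Pi.add_apply] at *
  rw [hden]
  field_simp
  ring

/-- Differential of the Finsleroid energy: `dE = e^{GΦ} ((b + gq) db + q dq)`. -/
theorem hasDerivAt_energy {g : ℝ} (hg : g ∈ Set.Ioo (-2 : ℝ) 2) {b q : ℝ → ℝ} {b' q' : ℝ}
    (hb : HasDerivAt b b' 0) (hq : HasDerivAt q q' 0) (hq0 : 0 < q 0) :
    HasDerivAt (fun t => (1 / 2) * expFactor g (b t) (q t) *
        (b t ^ 2 + g * q t * b t + q t ^ 2))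
      (expFactor g (b 0) (q 0) * ((b 0 + g * q 0) * b' + q 0 * q')) 0 := by
  have hB := charForm_pos (b := b 0) hg hq0
  have h1 := ((hasDerivAt_expFactor hg hb hq hq0).const_mul (1 / 2)).mul
    (((hb.pow 2).add ((hq.const_mul g).mul hb)).add (hq.pow 2))
  refine h1.congr_deriv ?_
  simp only [Pi.add_apply, Pi.mul_apply, Pi.pow_apply]
  have key := div_mul_cancel₀ (g * (q 0 * b' - b 0 * q')) hB.ne'
  push_cast
  linear_combination (1 / 2 * expFactor g (b 0) (q 0)) * key

theorem sum_contract {ι : Type*} (s : Finset ι) (K c d e : ℝ) (u m β z : ι → ℝ) :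
    ∑ j ∈ s, K * (c * (u j + d * β j) + (m j + e * β j)) * z j =
      K * (c * (∑ j ∈ s, u j * z j + d * ∑ j ∈ s, β j * z j) +
        (∑ j ∈ s, m j * z j + e * ∑ j ∈ s, β j * z j)) := by
  simp only [Finset.mul_sum, ← Finset.sum_add_distrib]
  exact Finset.sum_congr rfl fun j _ => by ring

variable {n : ℕ} {A : Matrix (Fin n) (Fin n) ℝ} {β : Vec n} {qf : Vec n → ℝ}

/-- `dq_i = ((Ay)_i − b β_i) / q`. -/
theorem hasDerivAt_line_q (hA : A.IsSymm)
    (hq : ∀ y, qf y = Real.sqrt (∑ i, ∑ j, (A i j - β i * β j) * y i * y j))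
    (y : Vec n) (hy : 0 < qf y) (i : Fin n) :
    HasDerivAt (fun t : ℝ => qf (y + t • Pi.single i 1))
      ((∑ k, A i k * y k - (∑ k, β k * y k) * β i) / qf y) 0 := by
  have h0 := hasDerivAt_line_quadratic (fun i j => A i j - β i * β j) i y
  have hS : 0 < ∑ i, ∑ j, (A i j - β i * β j) * y i * y j := by
    rw [hq] at hy; exact Real.sqrt_pos.mp hy
  have h1 := h0.sqrt (by simpa using hS.ne')
  simp only [hq]
  refine h1.congr_deriv ?_
  simp only [zero_smul, add_zero]
  have : ∑ p, (A i p - β i * β p + (A p i - β p * β i)) * y p =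
      2 * (∑ k, A i k * y k - (∑ k, β k * y k) * β i) := by
    rw [Finset.sum_mul, ← Finset.sum_sub_distrib, Finset.mul_sum]
    refine Finset.sum_congr rfl fun p _ => ?_
    rw [hA.apply i p]
    ring
  rw [this, mul_div_mul_left _ _ (two_ne_zero)]

/-- Where `q > 0`, the radicand in its definition is positive, so `a(y, y) = b² + q²`. -/
theorem q_sq (hq : ∀ y, qf y = Real.sqrt (∑ i, ∑ j, (A i j - β i * β j) * y i * y j))
    (y : Vec n) (hy : 0 < qf y) :
    ∑ i, ∑ j, A i j * y i * y j = (∑ k, β k * y k) ^ 2 + qf y ^ 2 := by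
  have hS : 0 < ∑ i, ∑ j, (A i j - β i * β j) * y i * y j := by
    rw [hq] at hy; exact Real.sqrt_pos.mp hy
  rw [hq y, Real.sq_sqrt hS.le, sq, Finset.sum_mul_sum, ← Finset.sum_add_distrib]
  refine Finset.sum_congr rfl fun i _ => ?_
  rw [← Finset.sum_add_distrib]
  exact Finset.sum_congr rfl fun j _ => by ring

variable {U : Set (Vec n)} {a : Vec n → Matrix (Fin n) (Fin n) ℝ} {α gch : Vec n → ℝ}
  {bax q E : Fn n} {W : Set (Vec n × Vec n)} {x y : Vec n}

/-- First fiber derivatives: `E_j = e^{GΦ} ((ay)_j + g q α_j)`. -/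
theorem pdy_finsleroid (ha : (a x).IsSymm) (hg : gch x ∈ Set.Ioo (-2 : ℝ) 2)
    (hbax : ∀ x y, bax x y = ∑ i, pda α i x * y i)
    (hq : ∀ x y, q x y =
      Real.sqrt (∑ i, ∑ j, (a x i j - pda α i x * pda α j x) * y i * y j))
    (hE : ∀ x y, E x y = (1 / 2) * expFactor (gch x) (bax x y) (q x y) *
        ((bax x y) ^ 2 + gch x * q x y * bax x y + (q x y) ^ 2))
    (hd : DifferentiableAt ℝ (E x) y) (hy : 0 < q x y) (j : Fin n) :
    pdy j E x y = expFactor (gch x) (bax x y) (q x y) *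
      (∑ k, a x j k * y k + gch x * q x y * pda α j x) := by
  refine pdy_eq_of_line hd ?_
  have hb1 := hasDerivAt_line_linear (fun i => pda α i x) j y
  simp only [← hbax] at hb1
  have hq1 := hasDerivAt_line_q (β := fun i => pda α i x) ha (hq x) y hy j
  simp only [hE]
  refine (hasDerivAt_energy hg hb1 hq1 (by simpa using hy)).congr_deriv ?_
  simp only [zero_smul, add_zero, ← hbax]
  field_simp
  ring

/-- Second fiber derivatives, with `q_i = ((ay)_i − b α_i) / q`:
`g_{ij} = e^{GΦ} (g (q α_i − b q_i) / B · ((ay)_j + g q α_j) + a_{ij} + g q_i α_j)`. -/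
theorem gdown_finsleroid (hW : IsOpen W) (hWU : ∀ x y, (x, y) ∈ W → x ∈ U ∧ 0 < q x y)
    (ha : ∀ x ∈ U, (a x).IsSymm) (hg : ∀ x ∈ U, gch x ∈ Set.Ioo (-2 : ℝ) 2)
    (hbax : ∀ x y, bax x y = ∑ i, pda α i x * y i)
    (hq : ∀ x y, q x y =
      Real.sqrt (∑ i, ∑ j, (a x i j - pda α i x * pda α j x) * y i * y j))
    (hE : ∀ x y, E x y = (1 / 2) * expFactor (gch x) (bax x y) (q x y) *
        ((bax x y) ^ 2 + gch x * q x y * bax x y + (q x y) ^ 2))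
    (hEs : SmoothFn W E) (h : (x, y) ∈ W) (i j : Fin n) :
    gdown E i j x y = expFactor (gch x) (bax x y) (q x y) *
      (gch x * (q x y * pda α i x -
          bax x y * ((∑ k, a x i k * y k - bax x y * pda α i x) / q x y)) /
          ((bax x y) ^ 2 + gch x * q x y * bax x y + (q x y) ^ 2) *
          (∑ k, a x j k * y k + gch x * q x y * pda α j x) +
        (a x j i +
          gch x * ((∑ k, a x i k * y k - bax x y * pda α i x) / q x y) * pda α j x)) := by
  have hc : ∀ x y, (x, y) ∈ W → pdy j E x y = expFactor (gch x) (bax x y) (q x y) *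
      (∑ k, a x j k * y k + gch x * q x y * pda α j x) := fun x y hxy =>
    pdy_finsleroid (ha x (hWU x y hxy).1) (hg x (hWU x y hxy).1) hbax hq hE
      (hEs.diff_y hW hxy) (hWU x y hxy).2 j
  obtain ⟨hx, hy⟩ := hWU x y h
  have hd : DifferentiableAt ℝ (fun y => expFactor (gch x) (bax x y) (q x y) *
      (∑ k, a x j k * y k + gch x * q x y * pda α j x)) y :=
    ((hEs.pdy hW j).congr fun x y hxy => (hc x y hxy).symm).diff_y
      (f := fun x y => expFactor (gch x) (bax x y) (q x y) *
        (∑ k, a x j k * y k + gch x * q x y * pda α j x)) hW h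
  rw [gdown, pdy_congr hW hc h i]
  refine pdy_eq_of_line hd ?_
  have hb1 := hasDerivAt_line_linear (fun i => pda α i x) i y
  simp only [← hbax] at hb1
  have hq1 := hasDerivAt_line_q (β := fun i => pda α i x) (ha x hx) (hq x) y hy i
  have hl := hasDerivAt_line_linear (fun k => a x j k) i y
  refine ((hasDerivAt_expFactor (hg x hx) hb1 hq1 (by simpa using hy)).mul
    (hl.add ((hq1.const_mul (gch x)).mul_const (pda α j x)))).congr_deriv ?_
  simp only [zero_smul, add_zero]
  simp only [← hbax, Pi.add_apply, zero_smul, Pi.zero_apply, add_zero]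
  ring

end Finsleroid

/-! ### Norm of the axis and the rigidity identity -/

/-- the converse of Theorem B. For a Finsleroid–Finsler energy whose
axis 1-form is `dα`, one has `E·g^{kl}α_kα_l = ½(b² + q²)` on `V = {q > 0}`, which is a
quadratic form in `y` for each `x` (namely `½ a_{ij}y^iy^j`); consequently, under the
conformal change `Ẽ = e^{2α}E`, the contracted mixed curvatures of the Berwald connection
agree: `P̃^l_{ijk}α_l = P^l_{ijk}α_l` at every point of `V`. -/
theorem finsleroid_satisfies_contracted_rigidity
    {n : ℕ} (hn : 2 ≤ n) (U : Set (Vec n)) (hU : IsOpen U)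
    (a : Vec n → Matrix (Fin n) (Fin n) ℝ)
    (ha_smooth : ∀ i j : Fin n, ContDiffOn ℝ (⊤ : ℕ∞) (fun x => a x i j) U)
    (ha_symm : ∀ x ∈ U, (a x).IsSymm)
    (ha_pos : ∀ x ∈ U, (a x).PosDef)
    (α : Vec n → ℝ) (hα : ContDiffOn ℝ (⊤ : ℕ∞) α U)
    (hunit : ∀ x ∈ U, ∑ i, ∑ j, (a x)⁻¹ i j * pda α i x * pda α j x = 1)
    (gch : Vec n → ℝ) (hgch : ContDiffOn ℝ (⊤ : ℕ∞) gch U)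
    (hgrange : ∀ x ∈ U, gch x ∈ Set.Ioo (-2 : ℝ) 2)
    (bax q Φ E : Fn n)
    (hbax : ∀ x y, bax x y = ∑ i, pda α i x * y i)
    (hq : ∀ x y, q x y =
      Real.sqrt (∑ i, ∑ j, (a x i j - pda α i x * pda α j x) * y i * y j))
    (hΦ : ∀ x y, Φ x y = Real.arctan ((2 * bax x y + gch x * q x y) /
      (2 * Real.sqrt (1 - (gch x) ^ 2 / 4) * q x y)))
    (hE : ∀ x y, E x y =
      (1/2) * Real.exp ((gch x / Real.sqrt (1 - (gch x) ^ 2 / 4)) * Φ x y) *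
        ((bax x y) ^ 2 + gch x * q x y * bax x y + (q x y) ^ 2))
    (hpd : ∀ x ∈ U, ∀ y : Vec n, 0 < q x y → (gmat E x y).PosDef) :
    ∀ x ∈ U, ∀ y : Vec n, 0 < q x y →
      (E x y * ∑ k, ∑ l, gup E k l x y * pda α k x * pda α l x
          = (1/2) * ((bax x y) ^ 2 + (q x y) ^ 2)) ∧
      ((1/2) * ((bax x y) ^ 2 + (q x y) ^ 2)
          = (1/2) * ∑ i, ∑ j, a x i j * y i * y j) ∧
      (∀ i j k : Fin n,
        (∑ l, mixedCurv (confE E α) l i j k x y * pda α l x) =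
          ∑ l, mixedCurv E l i j k x y * pda α l x) := by
  have hΦE : ∀ x y, E x y = (1 / 2) * expFactor (gch x) (bax x y) (q x y) *
      ((bax x y) ^ 2 + gch x * q x y * bax x y + (q x y) ^ 2) := by
    intro x y
    rw [hE, hΦ, expFactor]
  have hβ := pda_smooth hU hα
  let S : Fn n := fun x y => ∑ i, ∑ j, (a x i j - pda α i x * pda α j x) * y i * y j
  have hSs : ∀ W : Set (Vec n × Vec n), (∀ p ∈ W, p.1 ∈ U) → SmoothFn W S := fun W hWU =>
    SmoothFn.sum fun i _ => SmoothFn.sum fun j _ =>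
      ((SmoothFn.of_base ((ha_smooth i j).sub ((hβ i).mul (hβ j))) hWU).mul
        (SmoothFn.coord i)).mul (SmoothFn.coord j)
  let W : Set (Vec n × Vec n) := {p | p.1 ∈ U ∧ 0 < q p.1 p.2}
  have hqS : ∀ x y, 0 < q x y ↔ 0 < S x y := fun x y => by rw [hq, Real.sqrt_pos]
  have hW : IsOpen W := by
    have h1 := (hSs (U ×ˢ Set.univ) fun p hp => hp.1).continuousOn.isOpen_inter_preimage
      (hU.prod isOpen_univ) (isOpen_Ioi (a := (0 : ℝ)))
    have h2 : W = U ×ˢ Set.univ ∩ (fun p : Vec n × Vec n => S p.1 p.2) ⁻¹' Set.Ioi 0 := by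
      ext p
      simp [W, hqS]
    exact h2 ▸ h1
  have hWU : ∀ p ∈ W, p.1 ∈ U := fun p hp => hp.1
  have hbs : SmoothFn W bax := (SmoothFn.sum fun i _ =>
    (SmoothFn.of_base (hβ i) hWU).mul (SmoothFn.coord i)).congr fun x y _ => hbax x y
  have hqs : SmoothFn W q :=
    (ContDiffOn.sqrt (hSs W hWU) fun p hp => ((hqS _ _).mp hp.2).ne').congr
      fun p _ => hq p.1 p.2
  have hgs : SmoothFn W (fun x _ => gch x) := SmoothFn.of_base hgch hWU
  have hhs : SmoothFn W (fun x _ => Real.sqrt (1 - gch x ^ 2 / 4)) :=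
    ContDiffOn.sqrt (contDiffOn_const.sub (ContDiffOn.div_const (ContDiffOn.pow hgs 2) 4))
      fun p hp => (charge_pos (hgrange _ hp.1)).ne'
  have hhpos : ∀ p ∈ W, Real.sqrt (1 - gch p.1 ^ 2 / 4) ≠ 0 := fun p hp =>
    (Real.sqrt_pos.mpr (charge_pos (hgrange _ hp.1))).ne'
  have hKs : SmoothFn W (fun x y => expFactor (gch x) (bax x y) (q x y)) := by
    refine ContDiffOn.exp (ContDiffOn.mul (ContDiffOn.div hgs hhs hhpos) (ContDiffOn.arctan
      (ContDiffOn.div (((SmoothFn.const 2).mul hbs).add (hgs.mul hqs))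
        (((SmoothFn.const 2).mul hhs).mul hqs) fun p hp => ?_)))
    exact mul_ne_zero (mul_ne_zero two_ne_zero (hhpos p hp)) hp.2.ne'
  have hEs : SmoothFn W E :=
    (((SmoothFn.const (1 / 2)).mul hKs).mul
      (((hbs.mul hbs).add ((hgs.mul hqs).mul hbs)).add (hqs.mul hqs))).congr
      fun x y _ => by rw [hΦE]; ring
  have hdet : ∀ x y, (x, y) ∈ W → (gmat E x y).det ≠ 0 := fun x y h =>
    (hpd x h.1 y h.2).det_pos.ne'
  have hgd := fun {x y : Vec n} (h : (x, y) ∈ W) => gdown_finsleroid hW (U := U)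
    (fun x y hxy => hxy) ha_symm hgrange hbax hq hΦE hEs h
  have hE1 : ∀ {x y : Vec n}, (x, y) ∈ W → ∀ j, pdy j E x y =
      expFactor (gch x) (bax x y) (q x y) *
        (∑ k, a x j k * y k + gch x * q x y * pda α j x) := fun {x y} h j =>
    pdy_finsleroid (ha_symm x h.1) (hgrange x h.1) hbax hq hΦE (hEs.diff_y hW h) h.2 j
  have hqq : ∀ {x y : Vec n}, (x, y) ∈ W →
      ∑ i, ∑ j, a x i j * y i * y j = bax x y ^ 2 + q x y ^ 2 := fun {x y} h => by
    rw [hbax]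
    exact q_sq (β := fun i => pda α i x) (hq x) y h.2
  -- `g_{ij} z^j`, in terms of the contractions of `z` with `α`, `a y` and `a`.
  have hcontr : ∀ {x y : Vec n}, (x, y) ∈ W → ∀ (z : Vec n) (i : Fin n),
      ∑ j, gdown E i j x y * z j = expFactor (gch x) (bax x y) (q x y) *
      (gch x * (q x y * pda α i x -
          bax x y * ((∑ k, a x i k * y k - bax x y * pda α i x) / q x y)) /
          ((bax x y) ^ 2 + gch x * q x y * bax x y + (q x y) ^ 2) *
          (∑ j, (∑ k, a x j k * y k) * z j + gch x * q x y * ∑ j, pda α j x * z j) +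
        (∑ j, a x j i * z j + gch x * ((∑ k, a x i k * y k - bax x y * pda α i x) / q x y) *
          ∑ j, pda α j x * z j)) := by
    intro x y h z i
    simp only [hgd h]
    exact sum_contract _ _ _ _ _ _ _ _ _
  have hsymm : ∀ {x : Vec n}, x ∈ U → ∀ (z : Vec n) (i : Fin n),
      ∑ j, a x j i * z j = ∑ j, a x i j * z j := fun {x} hx z i =>
    Finset.sum_congr rfl fun j _ => by rw [(ha_symm x hx).apply i j]
  have heuler : ∀ x y, (x, y) ∈ W → ∀ i, ∑ j, gdown E i j x y * y j = pdy i E x y := by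
    intro x y h i
    have hB := charForm_pos (b := bax x y) (hgrange x h.1) h.2
    have hyy : ∑ j, (∑ k, a x j k * y k) * y j = bax x y ^ 2 + q x y ^ 2 := by
      rw [← hqq h]
      simp only [Finset.sum_mul]
      exact Finset.sum_congr rfl fun j _ => Finset.sum_congr rfl fun k _ => by ring
    have hq0 : q x y ≠ 0 := h.2.ne'
    rw [hcontr h, hE1 h, hsymm h.1, hyy, ← hbax]
    congr 1
    generalize hBd : (bax x y) ^ 2 + gch x * q x y * bax x y + (q x y) ^ 2 = B at hB ⊢
    have hB0 := hB.ne'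
    field_simp
    rw [← hBd]
    ring
  -- `X = e^{-GΦ} (a⁻¹α − (gq/B) y)` solves `g_{ij} X^j = α_i`.
  have hnorm : ∀ x y, (x, y) ∈ W → E x y * ∑ k, ∑ l, gup E k l x y * pda α k x * pda α l x =
      (1 / 2) * ((bax x y) ^ 2 + (q x y) ^ 2) := by
    intro x y h
    have hB := charForm_pos (b := bax x y) (hgrange x h.1) h.2
    have hq0 : q x y ≠ 0 := h.2.ne'
    have hK : expFactor (gch x) (bax x y) (q x y) ≠ 0 := (Real.exp_pos _).ne'
    let v : Vec n := fun j => ∑ k, (a x)⁻¹ j k * pda α k x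
    have hv1 : ∑ j, pda α j x * v j = 1 := by
      rw [← hunit x h.1]
      simp only [v, Finset.mul_sum]
      exact Finset.sum_congr rfl fun j _ => Finset.sum_congr rfl fun k _ => by ring
    have hav : ∀ i, ∑ j, a x i j * v j = pda α i x := by
      intro i
      have h1 : (a x).mulVec ((a x)⁻¹.mulVec fun k => pda α k x) = fun k => pda α k x := by
        rw [Matrix.mulVec_mulVec, Matrix.mul_nonsing_inv _ (ha_pos x h.1).det_pos.ne'.isUnit,
          Matrix.one_mulVec]
      simpa [Matrix.mulVec, dotProduct, v] using congrFun h1 i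
    have hyv : ∑ j, (∑ k, a x j k * y k) * v j = bax x y := by
      simp only [Finset.sum_mul]
      rw [Finset.sum_comm, hbax]
      refine Finset.sum_congr rfl fun k _ => ?_
      rw [← hav k, ← hsymm h.1, Finset.sum_mul]
      exact Finset.sum_congr rfl fun j _ => by ring
    let X : Vec n := fun j => (expFactor (gch x) (bax x y) (q x y))⁻¹ *
      (v j - gch x * q x y / ((bax x y) ^ 2 + gch x * q x y * bax x y + (q x y) ^ 2) * y j)
    have hX : ∀ i, ∑ j, gdown E i j x y * X j = pda α i x := by
      intro i
      have h1 : ∑ j, gdown E i j x y * X j = (expFactor (gch x) (bax x y) (q x y))⁻¹ *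
          (∑ j, gdown E i j x y * v j -
            gch x * q x y / ((bax x y) ^ 2 + gch x * q x y * bax x y + (q x y) ^ 2) *
              ∑ j, gdown E i j x y * y j) := by
        simp only [X, Finset.mul_sum, ← Finset.sum_sub_distrib]
        exact Finset.sum_congr rfl fun j _ => by ring
      rw [h1, heuler x y h, hE1 h, hcontr h, hyv, hv1, hsymm h.1, hav]
      generalize hBd : (bax x y) ^ 2 + gch x * q x y * bax x y + (q x y) ^ 2 = B at hB ⊢
      have hB0 := hB.ne'
      field_simp
      rw [← hBd]
      ring
    have hg := gup_solve (hdet x y h) hX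
    have h2 : ∑ k, ∑ l, gup E k l x y * pda α k x * pda α l x = ∑ k, pda α k x * X k := by
      refine Finset.sum_congr rfl fun k _ => ?_
      rw [← hg k, Finset.mul_sum]
      exact Finset.sum_congr rfl fun l _ => by ring
    have h3 : ∑ k, pda α k x * X k = (expFactor (gch x) (bax x y) (q x y))⁻¹ *
        (∑ k, pda α k x * v k -
          gch x * q x y / ((bax x y) ^ 2 + gch x * q x y * bax x y + (q x y) ^ 2) *
            ∑ k, pda α k x * y k) := by
      simp only [X, Finset.mul_sum, ← Finset.sum_sub_distrib]
      exact Finset.sum_congr rfl fun j _ => by ring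
    rw [h2, h3, hv1, ← hbax, hΦE]
    generalize hBd : (bax x y) ^ 2 + gch x * q x y * bax x y + (q x y) ^ 2 = B at hB ⊢
    have hB0 := hB.ne'
    field_simp
    rw [← hBd]
    ring
  intro x hx y hy
  have h : (x, y) ∈ W := ⟨hx, hy⟩
  refine ⟨hnorm x y h, by rw [hqq h], fun i j k => ?_⟩
  refine contracted_mixedCurv_confE hU hα hW hWU hEs hdet heuler
    (fun x i j => (1 / 2) * a x i j) (fun x y h => ?_) h i j k
  rw [hnorm x y h, ← hqq h]
  simp only [Finset.mul_sum, mul_assoc]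

end FinslerConformal
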